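/- Assume hypotheses (H1)–(H5) and (H6*), and assume that M⁺ is a singular irreducible M-matrix. Then for every solution x : ℤ → ℝⁿ of model (1) with initial time σ ∈ ℕ and bounded initial condition, there exists a vector S = (S_1,…,S_n) with S_i ≥ 0 such that limsup_{m→∞} |x_i(m)| ≤ S_i for every i, and S satisfies the system S_i = (1/(1−a_i⁺)) ∑_{j=1}^n ( c_{ij}⁺ g*_{ij}(S_j) + ∑_{p=1}^P b_{ijp}⁺ f*_{ijp}(S_j) ) for all i ∈ {1,…,n}. (Lemma 3.2, item ii.) -/

import Mathlib

/-- A real square matrix with non-positive off-diagonal entries is an `M`-matrix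
if all its principal minors are nonnegative. -/
def IsMMatrix {n : ℕ} (A : Matrix (Fin n) (Fin n) ℝ) : Prop :=
  (∀ i j, i ≠ j → A i j ≤ 0) ∧
  ∀ s : Finset (Fin n),
    0 ≤ (A.submatrix (fun i : s => (i : Fin n)) (fun j : s => (j : Fin n))).det

/-- A real square matrix is reducible if `n = 1` and `A = 0`, or if some simultaneous
permutation of rows and columns puts it in block lower triangular form; equivalently,
there is a nonempty proper subset `S` of indices with `A i j = 0` whenever
`i ∈ S` and `j ∉ S`. -/
def IsReducible {n : ℕ} (A : Matrix (Fin n) (Fin n) ℝ) : Prop :=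
  (n = 1 ∧ A = 0) ∨
  ∃ S : Finset (Fin n), S.Nonempty ∧ S ≠ Finset.univ ∧ ∀ i ∈ S, ∀ j ∉ S, A i j = 0

/-- `fplus f x` is the maximum of `f` on the interval between `0` and `x`. -/
noncomputable def fplus (f : ℝ → ℝ) (x : ℝ) : ℝ := sSup (f '' Set.uIcc 0 x)

/-- `fminus f x` is the minimum of `f` on the interval between `0` and `x`. -/
noncomputable def fminus (f : ℝ → ℝ) (x : ℝ) : ℝ := sInf (f '' Set.uIcc 0 x)

/-- `fstar f x = max {f₊(x), f₊(-x), -f₋(x), -f₋(-x)}`. -/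
noncomputable def fstar (f : ℝ → ℝ) (x : ℝ) : ℝ :=
  max (max (fplus f x) (fplus f (-x))) (max (-(fminus f x)) (-(fminus f (-x))))

/-!
Write `d i = 1 - a_i⁺` and let `K` be the nonnegative matrix with `M⁺ = diag d - K`. Everything
rests on an entrywise positive vector `v` with `M⁺ v ≥ 0`. For `t > 0` the sign condition on the
principal minors gives `det (M⁺ + t I) > 0`. The vector `w t = adj (M⁺ + t I) 1` solves
`(M⁺ + t I) w = det (M⁺ + t I) 1`, depends continuously on `t`, and is positive for large `t` by
diagonal dominance. Its smallest entry cannot vanish for `t > 0`, so it stays positive down to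
`t = 0`. A normalized limit as `t → 0` is a nonzero `v ≥ 0` with `M⁺ v ≥ 0`, and irreducibility
makes it positive (`exists_pos_mulVec_nonneg`).

With such a `v`, the weighted norm `max_i |x_i| / v_i` increases along a solution by at most a
summable amount, so `|x_i| ≤ W v_i` for all times (`solution_bounded`). Let `L_i` be the limit
superior of `|x_i|`. Taking limits superior in the recursion, with dominated convergence for the
infinite delay (`AsympLE.convolution`), gives `L ≤ Φ L`, where `Φ` is the right-hand side of the
system for `S`. The map `Φ` is monotone on nonnegative vectors, because `fstar f y` is the maximum
of `|f|` on `[-y, y]`, and `Φ (W v) ≤ W v` because `fstar f y ≤ F y` and `M⁺ v ≥ 0`. The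
Knaster-Tarski argument on the order interval up to `W v` then yields a fixed point `S ≥ L`
(`exists_fixed_point_ge`).
-/

open Filter Topology

/-! ### Positive vectors for irreducible M-matrices -/

/-- The principal minor on `s` is the determinant of the full-size matrix whose rows outside `s`
are replaced by those of the identity. -/
lemma det_rows_or_one {n : ℕ} (A : Matrix (Fin n) (Fin n) ℝ) (s : Finset (Fin n)) :
    (Matrix.of fun i j => if i ∈ s then A i j else (1 : Matrix (Fin n) (Fin n) ℝ) i j).det =
      (A.submatrix (fun i : s => (i : Fin n)) (fun j : s => (j : Fin n))).det := by
  rw [Matrix.twoBlockTriangular_det _ (fun i => i ∈ s)]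
  · have h1 : Matrix.toSquareBlockProp
        (Matrix.of fun i j => if i ∈ s then A i j else (1 : Matrix (Fin n) (Fin n) ℝ) i j)
        (fun i => i ∈ s) = A.submatrix (fun i : s => (i : Fin n)) (fun j : s => (j : Fin n)) := by
      ext i j
      simp [Matrix.toSquareBlockProp_def]
    have h2 : Matrix.toSquareBlockProp
        (Matrix.of fun i j => if i ∈ s then A i j else (1 : Matrix (Fin n) (Fin n) ℝ) i j)
        (fun i => i ∉ s) = 1 := by
      ext i j
      simp [Matrix.toSquareBlockProp_def, i.2, Matrix.one_apply, Subtype.ext_iff]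
    rw [h1, h2, Matrix.det_one, mul_one]
    convert rfl
  · intro i hi j hj
    have : i ≠ j := by rintro rfl; exact hi hj
    simp [hi, this]

/-- Expanding `det (A + t I)` multilinearly in the rows writes it as a sum of principal minors of
`A` times powers of `t`, the empty minor contributing `t ^ n > 0`. -/
lemma det_add_smul_one_pos {n : ℕ} {A : Matrix (Fin n) (Fin n) ℝ} (hA : IsMMatrix A)
    {t : ℝ} (ht : 0 < t) : 0 < (A + t • (1 : Matrix (Fin n) (Fin n) ℝ)).det := by
  have h1 : (A + t • (1 : Matrix (Fin n) (Fin n) ℝ)).det =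
      ∑ s : Finset (Fin n), t ^ (sᶜ).card *
        (A.submatrix (fun i : s => (i : Fin n)) (fun j : s => (j : Fin n))).det := by
    have := (Matrix.detRowAlternating (n := Fin n) (R := ℝ)).toMultilinearMap.map_add_univ
      (fun i j => A i j) (fun i j => t * (1 : Matrix (Fin n) (Fin n) ℝ) i j)
    refine Eq.trans ?_ (this.trans (Finset.sum_congr rfl fun s _ => ?_))
    · rfl
    have h2 := (Matrix.detRowAlternating (n := Fin n) (R := ℝ)).toMultilinearMap.map_piecewise_smul
      (fun _ => t)
      (fun i j => if i ∈ s then A i j else (1 : Matrix (Fin n) (Fin n) ℝ) i j) sᶜ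
    simp only [Finset.prod_const, smul_eq_mul] at h2
    rw [← det_rows_or_one]
    refine Eq.trans ?_ h2
    congr 1
    ext i j
    by_cases hi : i ∈ s <;> simp [hi]
  rw [h1]
  refine Finset.sum_pos' (fun s _ => mul_nonneg (by positivity) (hA.2 s))
    ⟨∅, Finset.mem_univ _, ?_⟩
  rw [Matrix.det_isEmpty]
  positivity

/-- For an M-matrix `A` and `t > 0`, the solution `w` of `(A + t I) w = det (A + t I) • 1` given by
the adjugate is entrywise positive. -/
lemma adjugate_mulVec_pos {n : ℕ} {A : Matrix (Fin n) (Fin n) ℝ} (hA : IsMMatrix A)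
    {t : ℝ} (ht : 0 < t) (i : Fin n) :
    0 < ((A + t • (1 : Matrix (Fin n) (Fin n) ℝ)).adjugate.mulVec 1) i := by
  set w : ℝ → Fin n → ℝ := fun t =>
    (A + t • (1 : Matrix (Fin n) (Fin n) ℝ)).adjugate.mulVec 1 with hw
  have hcont : Continuous w := by
    have : Continuous fun t : ℝ => A + t • (1 : Matrix (Fin n) (Fin n) ℝ) := by fun_prop
    exact this.matrix_adjugate.matrix_mulVec continuous_const
  have heq : ∀ t i, t * w t i + ∑ j, A i j * w t j =
      (A + t • (1 : Matrix (Fin n) (Fin n) ℝ)).det := by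
    intro t i
    have h : (A + t • (1 : Matrix (Fin n) (Fin n) ℝ)).mulVec (w t) =
        (A + t • (1 : Matrix (Fin n) (Fin n) ℝ)).det • 1 := by
      rw [hw]
      simp only
      rw [Matrix.mulVec_mulVec, Matrix.mul_adjugate, Matrix.smul_mulVec, Matrix.one_mulVec]
    have h' := congrFun h i
    rw [Matrix.add_mulVec, Matrix.smul_mulVec, Matrix.one_mulVec] at h'
    simp only [Pi.add_apply, Pi.smul_apply, smul_eq_mul, Matrix.mulVec, dotProduct, Pi.one_apply,
      mul_one] at h'
    linarith
  -- a nonnegative `w t` has no zero entry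
  have hne : ∀ t, 0 < t → (∀ j, 0 ≤ w t j) → ∀ i, w t i ≠ 0 := by
    intro t ht h0 i hi
    have h1 := heq t i
    have h2 := det_add_smul_one_pos hA ht
    have h3 : ∑ j, A i j * w t j ≤ 0 := by
      refine Finset.sum_nonpos fun j _ => ?_
      by_cases hij : i = j
      · subst hij; simp [hi]
      · exact mul_nonpos_of_nonpos_of_nonneg (hA.1 i j hij) (h0 j)
    rw [hi] at h1
    linarith
  have : Nonempty (Fin n) := ⟨i⟩
  have huniv : (Finset.univ : Finset (Fin n)).Nonempty := ⟨i, Finset.mem_univ i⟩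
  set φ : ℝ → ℝ := fun t => Finset.univ.inf' huniv (fun i => w t i) with hφ
  have hφc : Continuous φ :=
    Continuous.finset_inf'_apply huniv fun i _ => (continuous_apply i).comp hcont
  have hφle : ∀ t i, φ t ≤ w t i := fun t i => Finset.inf'_le _ (Finset.mem_univ i)
  have hφat : ∀ t, ∃ i, φ t = w t i := fun t => by
    obtain ⟨i, -, hi⟩ := Finset.exists_mem_eq_inf' huniv (fun i => w t i)
    exact ⟨i, hi⟩
  have hφ0 : ∀ t, 0 < t → φ t ≠ 0 := by
    intro t ht h0
    obtain ⟨i, hi⟩ := hφat t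
    exact hne t ht (fun j => h0 ▸ hφle t j) i (hi ▸ h0)
  -- for large `t` the matrix is diagonally dominant
  obtain ⟨T, hT, hφT⟩ : ∃ T, t ≤ T ∧ 0 < φ T := by
    set T := t + ∑ i, ∑ j, |A i j| with hTdef
    have hTt : t ≤ T := by
      rw [hTdef]
      have : 0 ≤ ∑ i, ∑ j, |A i j| := by positivity
      linarith
    refine ⟨T, hTt, ?_⟩
    obtain ⟨k, hk⟩ := hφat T
    have h1 := heq T k
    have h2 := det_add_smul_one_pos hA (ht.trans_le hTt)
    have h3 : ∑ j, A k j * w T j ≤ ∑ j, A k j * w T k := by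
      refine Finset.sum_le_sum fun j _ => ?_
      by_cases hkj : k = j
      · subst hkj; exact le_rfl
      · exact mul_le_mul_of_nonpos_left (hk ▸ hφle T j) (hA.1 k j hkj)
    rw [← Finset.sum_mul] at h3
    have h4 : 0 < (T + ∑ j, A k j) * w T k := by linarith
    have h5 : 0 < T + ∑ j, A k j := by
      have h6 : ∑ j, |A k j| ≤ ∑ i, ∑ j, |A i j| :=
        Finset.single_le_sum (f := fun i => ∑ j, |A i j|) (fun i _ => by positivity)
          (Finset.mem_univ k)
      have h7 := (abs_le.1 (Finset.abs_sum_le_sum_abs (fun j => A k j) Finset.univ)).1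
      rw [hTdef]
      linarith
    rw [hk]
    exact pos_of_mul_pos_right h4 h5.le
  have hpos : 0 < φ t := by
    by_contra hcon
    obtain ⟨s, hs, hs0⟩ := intermediate_value_Icc hT hφc.continuousOn
      (show (0 : ℝ) ∈ Set.Icc (φ t) (φ T) from ⟨not_lt.1 hcon, hφT.le⟩)
    exact hφ0 s (ht.trans_le hs.1) hs0
  exact hpos.trans_le (hφle t i)

/-- An irreducible M-matrix `A` admits an entrywise positive vector `v` with `A v ≥ 0`: it is a
limit of the normalized solutions for `A + t I` as `t → 0`, and irreducibility excludes zero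
entries. -/
lemma exists_pos_mulVec_nonneg {n : ℕ} (hn : 1 ≤ n) {A : Matrix (Fin n) (Fin n) ℝ}
    (hA : IsMMatrix A) (hirr : ¬ IsReducible A) :
    ∃ v : Fin n → ℝ, (∀ i, 0 < v i) ∧ ∀ i, 0 ≤ ∑ j, A i j * v j := by
  have : Nonempty (Fin n) := ⟨⟨0, hn⟩⟩
  have hu : ∀ k : ℕ, ∃ u ∈ stdSimplex ℝ (Fin n),
      ∀ i, 0 ≤ 1 / ((k : ℝ) + 1) * u i + ∑ j, A i j * u j := by
    intro k
    set t : ℝ := 1 / ((k : ℝ) + 1) with htdef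
    have ht : 0 < t := by positivity
    set w := (A + t • (1 : Matrix (Fin n) (Fin n) ℝ)).adjugate.mulVec 1 with hw
    have hwp : ∀ i, 0 < w i := adjugate_mulVec_pos hA ht
    have hs : 0 < ∑ i, w i := Finset.sum_pos (fun i _ => hwp i) Finset.univ_nonempty
    have h : (A + t • (1 : Matrix (Fin n) (Fin n) ℝ)).mulVec w =
        (A + t • (1 : Matrix (Fin n) (Fin n) ℝ)).det • 1 := by
      rw [hw, Matrix.mulVec_mulVec, Matrix.mul_adjugate, Matrix.smul_mulVec, Matrix.one_mulVec]
    refine ⟨fun i => w i / ∑ i, w i, ⟨fun i => (div_pos (hwp i) hs).le, ?_⟩, fun i => ?_⟩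
    · rw [← Finset.sum_div, div_self hs.ne']
    · have h' := congrFun h i
      rw [Matrix.add_mulVec, Matrix.smul_mulVec, Matrix.one_mulVec] at h'
      simp only [Pi.add_apply, Pi.smul_apply, smul_eq_mul, Matrix.mulVec, dotProduct, Pi.one_apply,
        mul_one] at h'
      have h2 := det_add_smul_one_pos hA ht
      have h3 : t * (w i / ∑ i, w i) + ∑ j, A i j * (w j / ∑ i, w i) =
          (∑ j, A i j * w j + t * w i) / ∑ i, w i := by
        rw [add_div, Finset.sum_div, add_comm]
        simp only [mul_div_assoc]
      rw [h3, h']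
      exact (div_pos h2 hs).le
  choose u hus hu using hu
  obtain ⟨v, hv, φ, hφ, hlim⟩ := (isCompact_stdSimplex ℝ (Fin n)).tendsto_subseq hus
  have hvi : ∀ i, Tendsto (fun k => u (φ k) i) atTop (𝓝 (v i)) := fun i =>
    (tendsto_pi_nhds.1 hlim) i
  have hAv : ∀ i, 0 ≤ ∑ j, A i j * v j := by
    intro i
    have h1 : Tendsto (fun k => 1 / ((φ k : ℝ) + 1) * u (φ k) i + ∑ j, A i j * u (φ k) j) atTop
        (𝓝 (0 * v i + ∑ j, A i j * v j)) :=
      ((tendsto_one_div_add_atTop_nhds_zero_nat.comp hφ.tendsto_atTop).mul (hvi i)).add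
        (tendsto_finsetSum _ fun j _ => (hvi j).const_mul _)
    have h2 := ge_of_tendsto' h1 fun k => hu (φ k) i
    simpa using h2
  refine ⟨v, fun i => ?_, hAv⟩
  by_contra hi
  have hi0 : v i = 0 := le_antisymm (not_lt.1 hi) (hv.1 i)
  -- the zero entries of `v` would be a reducing set
  refine hirr (Or.inr ⟨Finset.univ.filter fun i => v i = 0, ⟨i, by simp [hi0]⟩, fun h => ?_, ?_⟩)
  · have : ∑ i, v i = 0 := Finset.sum_eq_zero fun j _ => by
      have : j ∈ Finset.univ.filter fun i => v i = 0 := by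
        rw [h]; exact Finset.mem_univ j
      simpa using this
    rw [hv.2] at this
    exact one_ne_zero this
  · intro k hk j hj
    simp only [Finset.mem_filter, Finset.mem_univ, true_and] at hk hj
    have hterm : ∀ l ∈ Finset.univ, A k l * v l ≤ 0 := by
      intro l _
      by_cases hkl : k = l
      · subst hkl; simp [hk]
      · exact mul_nonpos_of_nonpos_of_nonneg (hA.1 k l hkl) (hv.1 l)
    have hsum : ∑ l, A k l * v l = 0 := le_antisymm (Finset.sum_nonpos hterm) (hAv k)
    have := (Finset.sum_eq_zero_iff_of_nonpos hterm).1 hsum j (Finset.mem_univ j)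
    exact (mul_eq_zero.1 this).resolve_right hj

/-! ### Properties of `fstar` -/

lemma eq_zero_of_abs_lt {f : ℝ → ℝ} (hf : Continuous f) {F : ℝ}
    (hF : ∀ u : ℝ, u ≠ 0 → |f u| < F * |u|) : f 0 = 0 := by
  have h1 : Tendsto (fun u => |f u|) (𝓝[≠] 0) (𝓝 |f 0|) :=
    (hf.abs.tendsto 0).mono_left nhdsWithin_le_nhds
  have h2 : Tendsto (fun u : ℝ => F * |u|) (𝓝[≠] 0) (𝓝 (F * |0|)) :=
    ((continuous_const.mul continuous_abs).tendsto 0).mono_left nhdsWithin_le_nhds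
  have h3 : |f 0| ≤ F * |0| := le_of_tendsto_of_tendsto h1 h2 <|
    eventually_nhdsWithin_of_forall fun u hu => (hF u hu).le
  simpa using h3

lemma abs_le_mul_abs {f : ℝ → ℝ} (hf : Continuous f) {F : ℝ}
    (hF : ∀ u : ℝ, u ≠ 0 → |f u| < F * |u|) (u : ℝ) : |f u| ≤ F * |u| := by
  by_cases hu : u = 0
  · simp [hu, eq_zero_of_abs_lt hf hF]
  · exact (hF u hu).le

/-- Together with `fstar_le`, this says that `fstar f y` is the maximum of `|f|` on `[-y, y]`. -/
lemma abs_le_fstar {f : ℝ → ℝ} (hf : Continuous f) {u y : ℝ} (hu : |u| ≤ y) :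
    |f u| ≤ fstar f y := by
  have hb : ∀ z, BddAbove (f '' Set.uIcc 0 z) := fun z => (isCompact_uIcc.image hf).bddAbove
  have hb' : ∀ z, BddBelow (f '' Set.uIcc 0 z) := fun z => (isCompact_uIcc.image hf).bddBelow
  obtain ⟨h1, h2⟩ := abs_le.1 hu
  have key : ∀ z, u ∈ Set.uIcc 0 z → f u ≤ fplus f z ∧ fminus f z ≤ f u := fun z hz =>
    ⟨le_csSup (hb z) ⟨u, hz, rfl⟩, csInf_le (hb' z) ⟨u, hz, rfl⟩⟩
  unfold fstar
  rcases le_total 0 u with h0 | h0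
  · obtain ⟨k1, k2⟩ := key y (Set.mem_uIcc.2 (Or.inl ⟨h0, h2⟩))
    refine abs_le'.2 ⟨?_, ?_⟩
    · exact k1.trans ((le_max_left _ _).trans (le_max_left _ _))
    · exact (neg_le_neg k2).trans ((le_max_left _ _).trans (le_max_right _ _))
  · obtain ⟨k1, k2⟩ := key (-y) (Set.mem_uIcc.2 (Or.inr ⟨h1, h0⟩))
    refine abs_le'.2 ⟨?_, ?_⟩
    · exact k1.trans ((le_max_right _ _).trans (le_max_left _ _))
    · exact (neg_le_neg k2).trans ((le_max_right _ _).trans (le_max_right _ _))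

lemma fstar_le {f : ℝ → ℝ} {y C : ℝ} (hy : 0 ≤ y) (h : ∀ u, |u| ≤ y → |f u| ≤ C) :
    fstar f y ≤ C := by
  have key : ∀ z, |z| ≤ y → fplus f z ≤ C ∧ -fminus f z ≤ C := by
    intro z hz
    have hne : (f '' Set.uIcc 0 z).Nonempty := Set.nonempty_uIcc.image f
    have hu : ∀ u ∈ Set.uIcc 0 z, |f u| ≤ C := fun u hu => h u <| by
      obtain ⟨h1, h2⟩ := abs_le.1 hz
      rcases Set.mem_uIcc.1 hu with h3 | h3 <;> exact abs_le.2 ⟨by linarith, by linarith⟩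
    constructor
    · refine csSup_le hne ?_
      rintro _ ⟨u, hu', rfl⟩
      exact (abs_le.1 (hu u hu')).2
    · refine neg_le.1 (le_csInf hne ?_)
      rintro _ ⟨u, hu', rfl⟩
      exact (abs_le.1 (hu u hu')).1
  have hy1 : |y| ≤ y := (abs_of_nonneg hy).le
  have hy2 : |-y| ≤ y := by rwa [abs_neg]
  exact max_le (max_le (key y hy1).1 (key _ hy2).1) (max_le (key y hy1).2 (key _ hy2).2)

lemma fstar_nonneg {f : ℝ → ℝ} (hf : Continuous f) {y : ℝ} (hy : 0 ≤ y) : 0 ≤ fstar f y :=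
  (abs_nonneg (f 0)).trans (abs_le_fstar hf (by simpa using hy))

lemma fstar_mono {f : ℝ → ℝ} (hf : Continuous f) {y z : ℝ} (hy : 0 ≤ y) (hyz : y ≤ z) :
    fstar f y ≤ fstar f z :=
  fstar_le hy fun _ hu => abs_le_fstar hf (hu.trans hyz)

lemma fstar_le_mul {f : ℝ → ℝ} (hf : Continuous f) {F : ℝ} (hF0 : 0 < F)
    (hF : ∀ u : ℝ, u ≠ 0 → |f u| < F * |u|) {y : ℝ} (hy : 0 ≤ y) : fstar f y ≤ F * y :=
  fstar_le hy fun u hu => (abs_le_mul_abs hf hF u).trans (mul_le_mul_of_nonneg_left hu hF0.le)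

/-! ### Asymptotic bounds -/

/-- `AsympLE l u C` means `limsup |u| ≤ C` along the filter `l`, stated without `limsup` so that
no boundedness side conditions arise. -/
def AsympLE {α : Type*} (l : Filter α) (u : α → ℝ) (C : ℝ) : Prop :=
  ∀ ε > 0, ∀ᶠ m in l, |u m| ≤ C + ε

namespace AsympLE

variable {α β : Type*} {l : Filter α}

lemma comp {l' : Filter β} {u : α → ℝ} {C : ℝ} (h : AsympLE l u C) {k : β → α}
    (hk : Tendsto k l' l) : AsympLE l' (fun m => u (k m)) C :=
  fun ε hε => hk.eventually (h ε hε)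

lemma add {u w : α → ℝ} {C D : ℝ} (hu : AsympLE l u C) (hw : AsympLE l w D) :
    AsympLE l (fun m => u m + w m) (C + D) := by
  intro ε hε
  filter_upwards [hu (ε / 2) (half_pos hε), hw (ε / 2) (half_pos hε)] with m h1 h2
  exact (abs_add_le _ _).trans (by linarith)

lemma sum {ι : Type*} (s : Finset ι) {u : ι → α → ℝ} {C : ι → ℝ}
    (h : ∀ i, AsympLE l (u i) (C i)) :
    AsympLE l (fun m => ∑ i ∈ s, u i m) (∑ i ∈ s, C i) := by
  classical
  induction s using Finset.induction_on with
  | empty =>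
    intro ε hε
    simp [hε.le]
  | insert i s hi ih =>
    simp only [Finset.sum_insert hi]
    exact (h i).add ih

lemma mul_bdd {u w : α → ℝ} {B C : ℝ} (hB : 0 ≤ B) (hw : ∀ m, |w m| ≤ B)
    (hu : AsympLE l u C) : AsympLE l (fun m => w m * u m) (B * C) := by
  intro ε hε
  filter_upwards [hu (ε / (B + 1)) (by positivity)] with m h1
  rw [abs_mul]
  have h2 : |w m| * |u m| ≤ B * (C + ε / (B + 1)) :=
    mul_le_mul (hw m) h1 (abs_nonneg _) hB
  have h3 : B * (ε / (B + 1)) ≤ ε := by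
    rw [← mul_div_assoc, div_le_iff₀ (by positivity)]
    nlinarith
  linarith

lemma of_tendsto_zero {u : α → ℝ} (h : Tendsto u l (𝓝 0)) : AsympLE l u 0 := by
  intro ε hε
  filter_upwards [(tendsto_zero_iff_abs_tendsto_zero u).1 h |>.eventually_le_const hε] with m hm
  simpa using hm

/-- Compactness of `[-C, C]` gives `|f| < fstar f C + ε` on a neighbourhood of it. -/
lemma comp_continuous {u : α → ℝ} {C : ℝ} (hu : AsympLE l u C) {f : ℝ → ℝ}
    (hf : Continuous f) : AsympLE l (fun m => f (u m)) (fstar f C) := by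
  intro ε hε
  have hopen : IsOpen {w : ℝ | |f w| < fstar f C + ε} :=
    isOpen_lt hf.abs continuous_const
  have hsub : Set.Icc (-C) C ⊆ {w : ℝ | |f w| < fstar f C + ε} := fun w hw =>
    (abs_le_fstar hf (abs_le.2 hw)).trans_lt (lt_add_of_pos_right _ hε)
  by_cases hC : 0 ≤ C
  · obtain ⟨δ, hδ, hthick⟩ := isCompact_Icc.exists_cthickening_subset_open hopen hsub
    filter_upwards [hu δ hδ] with m hm
    refine le_of_lt (hthick (a := u m) ?_)
    -- the projection of `u m` to `[-C, C]` is within `δ`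
    refine Metric.mem_cthickening_of_dist_le (u m) (max (-C) (min (u m) C)) δ _
      ⟨le_max_left _ _, max_le (by linarith) (min_le_right _ _)⟩ ?_
    obtain ⟨h1, h2⟩ := abs_le.1 hm
    rw [Real.dist_eq]
    rcases le_total (u m) C with h3 | h3
    · rw [min_eq_left h3]
      rcases le_total (-C) (u m) with h4 | h4
      · rw [max_eq_right h4]; simpa using hδ.le
      · rw [max_eq_left h4]; exact abs_le.2 ⟨by linarith, by linarith⟩
    · rw [min_eq_right h3, max_eq_right (by linarith)]
      exact abs_le.2 ⟨by linarith, by linarith⟩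
  · have := hu (-C / 2) (by linarith)
    filter_upwards [this] with m hm
    linarith [abs_nonneg (u m)]

/-- Convolution with a kernel of total mass one preserves asymptotic bounds: the excess of `|h|`
over `C` is bounded and vanishes at infinity, so dominated convergence applies. -/
lemma convolution {ζ : ℕ → ℝ} (hζ : ∑' l, |ζ l| = 1) {h : ℤ → ℝ} {H C : ℝ}
    (hH : ∀ k, |h k| ≤ H) (hC : AsympLE atTop h C) :
    AsympLE atTop (fun m : ℕ => ∑' l : ℕ, ζ l * h ((m : ℤ) - l)) C := by
  have hζs : Summable fun l => |ζ l| := by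
    by_contra hcon
    rw [tsum_eq_zero_of_not_summable hcon] at hζ
    exact zero_ne_one hζ
  have hζ1 : HasSum (fun l => |ζ l|) 1 := hζ ▸ hζs.hasSum
  set e : ℤ → ℝ := fun k => max (|h k| - C) 0 with he
  have he0 : ∀ k, 0 ≤ e k := fun k => le_max_right _ _
  have heB : ∀ k, ‖e k‖ ≤ H + |C| := fun k => by
    rw [Real.norm_of_nonneg (he0 k)]
    refine max_le ?_ ?_
    · linarith [hH k, neg_abs_le C]
    · linarith [(abs_nonneg (h k)).trans (hH k), abs_nonneg C]
  have het : Tendsto e atTop (𝓝 0) := by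
    rw [Metric.tendsto_nhds]
    intro ε hε
    filter_upwards [hC (ε / 2) (half_pos hε)] with k hk
    rw [Real.dist_eq, sub_zero, abs_of_nonneg (he0 k)]
    exact max_lt (by linarith) hε
  have hsum : ∀ m : ℕ, Summable fun l : ℕ => |ζ l| * e ((m : ℤ) - l) := fun m =>
    Summable.of_norm_bounded (hζs.mul_right (H + |C|)) fun l => by
      rw [norm_mul, Real.norm_of_nonneg (abs_nonneg _)]
      exact mul_le_mul_of_nonneg_left (heB _) (abs_nonneg _)
  have hlim : Tendsto (fun m : ℕ => ∑' l : ℕ, |ζ l| * e ((m : ℤ) - l)) atTop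
      (𝓝 (∑' l : ℕ, |ζ l| * 0)) := by
    refine tendsto_tsum_of_dominated_convergence (hζs.mul_right (H + |C|)) (fun l => ?_)
      (Eventually.of_forall fun m l => ?_)
    · refine (het.comp ?_).const_mul _
      exact tendsto_atTop_add_const_right _ (-(l : ℤ)) tendsto_natCast_atTop_atTop
    · rw [norm_mul, Real.norm_of_nonneg (abs_nonneg _)]
      exact mul_le_mul_of_nonneg_left (heB _) (abs_nonneg _)
  simp only [mul_zero, tsum_zero] at hlim
  intro ε hε
  filter_upwards [hlim.eventually_le_const hε] with m hm
  have hbound : ‖∑' l : ℕ, ζ l * h ((m : ℤ) - l)‖ ≤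
      1 * C + ∑' l : ℕ, |ζ l| * e ((m : ℤ) - l) := by
    refine tsum_of_norm_bounded ((hζ1.mul_right C).add (hsum m).hasSum) fun l => ?_
    rw [norm_mul, Real.norm_eq_abs, Real.norm_eq_abs, ← mul_add]
    refine mul_le_mul_of_nonneg_left ?_ (abs_nonneg _)
    linarith [le_max_left (|h ((m : ℤ) - l)| - C) 0]
  rw [Real.norm_eq_abs] at hbound
  linarith

end AsympLE

/-! ### Fixed points of monotone maps -/

/-- Knaster-Tarski on an order interval of `Fin n → ℝ`: the supremum of all post-fixed points of a
monotone map is a fixed point. -/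
lemma exists_fixed_point_ge {n : ℕ} {Φ : (Fin n → ℝ) → Fin n → ℝ} {L U : Fin n → ℝ}
    (hmono : ∀ S T : Fin n → ℝ, 0 ≤ S → S ≤ T → Φ S ≤ Φ T) (hL0 : 0 ≤ L) (hLU : L ≤ U)
    (hL : L ≤ Φ L) (hU : Φ U ≤ U) : ∃ S, L ≤ S ∧ Φ S = S := by
  set X : Set (Fin n → ℝ) := {T | 0 ≤ T ∧ T ≤ U ∧ T ≤ Φ T} with hX
  have hLX : L ∈ X := ⟨hL0, hLU, hL⟩
  set S : Fin n → ℝ := fun i => sSup ((fun T => T i) '' X) with hS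
  have hne : ∀ i, ((fun T : Fin n → ℝ => T i) '' X).Nonempty := fun i => ⟨_, L, hLX, rfl⟩
  have hbdd : ∀ i, BddAbove ((fun T : Fin n → ℝ => T i) '' X) := fun i =>
    ⟨U i, by rintro _ ⟨T, hT, rfl⟩; exact hT.2.1 i⟩
  have hle : ∀ T ∈ X, T ≤ S := fun T hT i => le_csSup (hbdd i) ⟨T, hT, rfl⟩
  have hSU : S ≤ U := fun i => csSup_le (hne i) (by rintro _ ⟨T, hT, rfl⟩; exact hT.2.1 i)
  have hLS := hle L hLX
  have hS0 : 0 ≤ S := hL0.trans hLS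
  have hSΦ : S ≤ Φ S := fun i => csSup_le (hne i) <| by
    rintro _ ⟨T, hT, rfl⟩
    exact (hT.2.2.trans (hmono T S hT.1 (hle T hT))) i
  refine ⟨S, hLS, le_antisymm (hle _ ⟨hS0.trans hSΦ, ?_, hmono _ _ hS0 hSΦ⟩) hSΦ⟩
  exact (hmono _ _ hS0 hSU).trans hU

/-! ### Boundedness of solutions -/

lemma sum_weights {n P : ℕ} (c G : Fin n → ℝ) (b F : Fin n → Fin P → ℝ) (v : Fin n → ℝ) (D : ℝ) :
    ∑ j, (c j * (G j * (D * v j)) + ∑ p, b j p * (F j p * (D * v j))) =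
      D * ∑ j, (c j * G j + ∑ p, b j p * F j p) * v j := by
  rw [Finset.mul_sum]
  refine Finset.sum_congr rfl fun j _ => ?_
  rw [add_mul, Finset.sum_mul, mul_add, Finset.mul_sum]
  congr 1
  · ring
  · exact Finset.sum_congr rfl fun p _ => by ring

/-- If `v > 0` satisfies `M⁺ v ≥ 0` then `max_i |x_i| / v_i` grows at step `m` by at most the
normalized input `∑ i, |I i m| / v i`; summability of the input bounds the solution. -/
lemma solution_bounded {n P : ℕ}
    (a : Fin n → ℕ → ℝ) (ν : Fin n → ℕ → ℕ)
    (b : Fin n → Fin n → Fin P → ℕ → ℝ) (τ : Fin n → Fin n → Fin P → ℕ → ℕ)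
    (c : Fin n → Fin n → ℕ → ℝ) (ζ : Fin n → Fin n → ℕ → ℝ) (I : Fin n → ℕ → ℝ)
    (f : Fin n → Fin n → Fin P → ℝ → ℝ) (g : Fin n → Fin n → ℝ → ℝ)
    (F : Fin n → Fin n → Fin P → ℝ) (G : Fin n → Fin n → ℝ) (σ : ℕ) (x : ℤ → Fin n → ℝ)
    (ap : Fin n → ℝ) (bp : Fin n → Fin n → Fin P → ℝ) (cp : Fin n → Fin n → ℝ) (v : Fin n → ℝ)
    (hA : ∀ i m, |a i m| ≤ ap i) (hB : ∀ i j p m, |b i j p m| ≤ bp i j p)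
    (hC : ∀ i j m, |c i j m| ≤ cp i j) (hA0 : ∀ i, 0 ≤ ap i)
    (hζ : ∀ i j, HasSum (fun l => |ζ i j l|) 1)
    (hF0 : ∀ i j p, 0 ≤ F i j p) (hG0 : ∀ i j, 0 ≤ G i j)
    (hF : ∀ i j p u, |f i j p u| ≤ F i j p * |u|) (hG : ∀ i j u, |g i j u| ≤ G i j * |u|)
    (hv : ∀ i, 0 < v i)
    (hKv : ∀ i, ∑ j, (cp i j * G i j + ∑ p, bp i j p * F i j p) * v j ≤ (1 - ap i) * v i)
    (hinit : ∃ B : ℝ, ∀ m : ℤ, m ≤ (σ : ℤ) → ‖x m‖ ≤ B)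
    (hI : ∀ i, Summable fun m : ℕ => |I i m|)
    (hmodel : ∀ m : ℕ, σ ≤ m → ∀ i : Fin n,
      x ((m : ℤ) + 1) i =
        a i m * x ((m : ℤ) - ν i m) i
        + ∑ j, ∑ p, b i j p m * f i j p (x ((m : ℤ) - τ i j p m) j)
        + ∑ j, c i j m * ∑' l : ℕ, ζ i j l * g i j (x ((m : ℤ) - l) j)
        + I i m) :
    ∃ W : ℝ, ∀ k i, |x k i| ≤ W * v i := by
  obtain ⟨B, hBd⟩ := hinit
  have hB0 : 0 ≤ B := (norm_nonneg _).trans (hBd σ le_rfl)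
  set J : ℕ → ℝ := fun m => ∑ i, |I i m| / v i with hJ
  have hJ0 : ∀ m, 0 ≤ J m := fun m =>
    Finset.sum_nonneg fun i _ => div_nonneg (abs_nonneg _) (hv i).le
  have hJs : Summable J := summable_sum fun i _ => (hI i).div_const _
  set R : ℝ := ∑ i, B / v i with hR
  have hR0 : 0 ≤ R := Finset.sum_nonneg fun i _ => div_nonneg hB0 (hv i).le
  set D : ℕ → ℝ := fun m => R + ∑ l ∈ Finset.range m, J l with hD
  have hD0 : ∀ m, 0 ≤ D m := fun m => add_nonneg hR0 (Finset.sum_nonneg fun l _ => hJ0 l)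
  have hbound : ∀ m : ℕ, σ ≤ m → ∀ k : ℤ, k ≤ m → ∀ i, |x k i| ≤ D m * v i := by
    intro m hm
    induction m, hm using Nat.le_induction with
    | base =>
      intro k hk i
      have h1 : |x k i| ≤ B := (norm_le_pi_norm (x k) i).trans (hBd k hk)
      have h2 : B / v i ≤ R := Finset.single_le_sum (f := fun i => B / v i)
        (fun i _ => div_nonneg hB0 (hv i).le) (Finset.mem_univ i)
      have h3 : R ≤ D σ := le_add_of_nonneg_right (Finset.sum_nonneg fun l _ => hJ0 l)
      exact h1.trans ((div_le_iff₀ (hv i)).1 (h2.trans h3))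
    | succ m hm ih =>
      intro k hk i
      have hDs : D (m + 1) = D m + J m := by
        simp only [hD, Finset.sum_range_succ, add_assoc]
      rcases (show k ≤ m ∨ k = (m : ℤ) + 1 by push_cast at hk; omega) with hkm | rfl
      · refine (ih k hkm i).trans (mul_le_mul_of_nonneg_right ?_ (hv i).le)
        linarith [hJ0 m]
      rw [hmodel m hm i, hDs]
      have e1 : |a i m * x ((m : ℤ) - ν i m) i| ≤ ap i * (D m * v i) := by
        rw [abs_mul]
        exact mul_le_mul (hA i m) (ih _ (by omega) i) (abs_nonneg _) (hA0 i)
      have e2 : |∑ j, ∑ p, b i j p m * f i j p (x ((m : ℤ) - τ i j p m) j)| ≤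
          ∑ j, ∑ p, bp i j p * (F i j p * (D m * v j)) := by
        refine (Finset.abs_sum_le_sum_abs _ _).trans (Finset.sum_le_sum fun j _ =>
          (Finset.abs_sum_le_sum_abs _ _).trans (Finset.sum_le_sum fun p _ => ?_))
        rw [abs_mul]
        exact mul_le_mul (hB i j p m)
          ((hF i j p _).trans (mul_le_mul_of_nonneg_left (ih _ (by omega) j) (hF0 i j p)))
          (abs_nonneg _) ((abs_nonneg _).trans (hB i j p m))
      have e3 : |∑ j, c i j m * ∑' l : ℕ, ζ i j l * g i j (x ((m : ℤ) - l) j)| ≤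
          ∑ j, cp i j * (G i j * (D m * v j)) := by
        refine (Finset.abs_sum_le_sum_abs _ _).trans (Finset.sum_le_sum fun j _ => ?_)
        rw [abs_mul]
        refine mul_le_mul (hC i j m) ?_ (abs_nonneg _) ((abs_nonneg _).trans (hC i j m))
        have hs := (hζ i j).mul_right (G i j * (D m * v j))
        rw [one_mul] at hs
        rw [← Real.norm_eq_abs]
        refine tsum_of_norm_bounded hs fun l => ?_
        rw [norm_mul, Real.norm_eq_abs, Real.norm_eq_abs]
        exact mul_le_mul_of_nonneg_left
          ((hG i j _).trans (mul_le_mul_of_nonneg_left (ih _ (by omega) j) (hG0 i j)))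
          (abs_nonneg _)
      have e4 : |I i m| ≤ J m * v i := by
        rw [← div_le_iff₀ (hv i)]
        exact Finset.single_le_sum (f := fun i => |I i m| / v i)
          (fun i _ => div_nonneg (abs_nonneg _) (hv i).le) (Finset.mem_univ i)
      have e5 : ∑ j, cp i j * (G i j * (D m * v j)) +
          ∑ j, ∑ p, bp i j p * (F i j p * (D m * v j)) =
          D m * ∑ j, (cp i j * G i j + ∑ p, bp i j p * F i j p) * v j := by
        rw [← sum_weights, Finset.sum_add_distrib]
      have e6 := mul_le_mul_of_nonneg_left (hKv i) (hD0 m)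
      refine (abs_add_le _ _).trans ?_
      refine (add_le_add_left ((abs_add_le _ _).trans
        (add_le_add_left (abs_add_le _ _) _)) _).trans ?_
      linarith
  refine ⟨R + ∑' l, J l, fun k i => ?_⟩
  refine (hbound (max σ k.toNat) (le_max_left _ _) k (by omega) i).trans
    (mul_le_mul_of_nonneg_right ?_ (hv i).le)
  exact add_le_add le_rfl (hJs.sum_le_tsum _ fun l _ => hJ0 l)

/-! ### Limits superior of solutions -/

/-- Lemma 3.2, item ii: under (H1)-(H5), (H6*), if `M⁺` is a singular irreducible
M-matrix, then for every solution of model (1) with bounded initial condition there is a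
nonnegative vector `S` bounding the limsups of the components and solving system (3.9). -/
theorem limsup_bound_system_H6star
    (n P : ℕ) (hn : 1 ≤ n) (hP : 1 ≤ P)
    (a : Fin n → ℕ → ℝ) (ν : Fin n → ℕ → ℕ)
    (b : Fin n → Fin n → Fin P → ℕ → ℝ)
    (τ : Fin n → Fin n → Fin P → ℕ → ℕ)
    (c : Fin n → Fin n → ℕ → ℝ)
    (ζ : Fin n → Fin n → ℕ → ℝ)
    (I : Fin n → ℕ → ℝ)
    (f : Fin n → Fin n → Fin P → ℝ → ℝ)
    (g : Fin n → Fin n → ℝ → ℝ)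
    (F : Fin n → Fin n → Fin P → ℝ)
    (G : Fin n → Fin n → ℝ)
    (σ : ℕ) (x : ℤ → Fin n → ℝ)
    -- `x` has bounded initial condition: it is bounded on `(-∞, σ] ∩ ℤ`
    (hinit : ∃ B : ℝ, ∀ m : ℤ, m ≤ (σ : ℤ) → ‖x m‖ ≤ B)
    -- the inner series converge absolutely
    (habs : ∀ (i j : Fin n) (m : ℤ), Summable fun l : ℕ => |ζ i j l * g i j (x (m - l) j)|)
    -- `x` is a solution of model (1) from the initial time `σ` on
    (hmodel : ∀ m : ℕ, σ ≤ m → ∀ i : Fin n,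
      x ((m : ℤ) + 1) i =
        a i m * x ((m : ℤ) - ν i m) i
        + ∑ j, ∑ p, b i j p m * f i j p (x ((m : ℤ) - τ i j p m) j)
        + ∑ j, c i j m * ∑' l : ℕ, ζ i j l * g i j (x ((m : ℤ) - l) j)
        + I i m)
    -- (H1)
    (hH1 : ∀ i, BddAbove (Set.range fun m : ℕ => |a i m|) ∧ (⨆ m : ℕ, |a i m|) < 1)
    -- (H2)
    (hH2ν : ∀ i, Filter.Tendsto (fun m : ℕ => (m : ℤ) - ν i m) Filter.atTop Filter.atTop)
    (hH2τ : ∀ i j p,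
      Filter.Tendsto (fun m : ℕ => (m : ℤ) - τ i j p m) Filter.atTop Filter.atTop)
    -- (H3)
    (hH3b : ∀ i j p, BddAbove (Set.range fun m : ℕ => |b i j p m|))
    (hH3c : ∀ i j, BddAbove (Set.range fun m : ℕ => |c i j m|))
    -- (H4)
    (hH4 : ∀ i j, ∑' l : ℕ, |ζ i j l| = 1)
    -- (H5)
    (hH5 : ∀ i, Summable fun m : ℕ => |I i m|)
    -- (H6*)
    (hH6f : ∀ i j p, Continuous (f i j p) ∧ 0 < F i j p ∧
      ∀ u : ℝ, u ≠ 0 → |f i j p u| < F i j p * |u|)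
    (hH6g : ∀ i j, Continuous (g i j) ∧ 0 < G i j ∧
      ∀ u : ℝ, u ≠ 0 → |g i j u| < G i j * |u|)
    -- `M⁺` is a singular irreducible M-matrix
    (hM : IsMMatrix (Matrix.of fun i j : Fin n =>
        (if i = j then 1 - (⨆ m : ℕ, |a i m|) else 0)
        - ((⨆ m : ℕ, |c i j m|) * G i j + ∑ p, (⨆ m : ℕ, |b i j p m|) * F i j p)))
    (hMsing : (Matrix.of fun i j : Fin n =>
        (if i = j then 1 - (⨆ m : ℕ, |a i m|) else 0)
        - ((⨆ m : ℕ, |c i j m|) * G i j + ∑ p, (⨆ m : ℕ, |b i j p m|) * F i j p)).det = 0)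
    (hMirr : ¬ IsReducible (Matrix.of fun i j : Fin n =>
        (if i = j then 1 - (⨆ m : ℕ, |a i m|) else 0)
        - ((⨆ m : ℕ, |c i j m|) * G i j + ∑ p, (⨆ m : ℕ, |b i j p m|) * F i j p)))
    :
    ∃ S : Fin n → ℝ, (∀ i, 0 ≤ S i) ∧
      (∀ i, Filter.limsup (fun m : ℤ => |x m i|) Filter.atTop ≤ S i) ∧
      ∀ i, S i = (1 / (1 - (⨆ m : ℕ, |a i m|))) *
        ∑ j, ((⨆ m : ℕ, |c i j m|) * fstar (g i j) (S j)
          + ∑ p, (⨆ m : ℕ, |b i j p m|) * fstar (f i j p) (S j)) := by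
  set ap : Fin n → ℝ := fun i => ⨆ m : ℕ, |a i m| with hap
  set bp : Fin n → Fin n → Fin P → ℝ := fun i j p => ⨆ m : ℕ, |b i j p m| with hbp
  set cp : Fin n → Fin n → ℝ := fun i j => ⨆ m : ℕ, |c i j m| with hcp
  have hA : ∀ i m, |a i m| ≤ ap i := fun i m => le_ciSup (hH1 i).1 m
  have hB : ∀ i j p m, |b i j p m| ≤ bp i j p := fun i j p m => le_ciSup (hH3b i j p) m
  have hC : ∀ i j m, |c i j m| ≤ cp i j := fun i j m => le_ciSup (hH3c i j) m
  have hA0 : ∀ i, 0 ≤ ap i := fun i => (abs_nonneg _).trans (hA i 0)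
  have hB0 : ∀ i j p, 0 ≤ bp i j p := fun i j p => (abs_nonneg _).trans (hB i j p 0)
  have hC0 : ∀ i j, 0 ≤ cp i j := fun i j => (abs_nonneg _).trans (hC i j 0)
  have hA1 : ∀ i, 0 < 1 - ap i := fun i => sub_pos.2 (hH1 i).2
  have hζ1 : ∀ i j, HasSum (fun l => |ζ i j l|) 1 := fun i j => by
    have hs : Summable fun l => |ζ i j l| := by
      by_contra hcon
      have := hH4 i j
      rw [tsum_eq_zero_of_not_summable hcon] at this
      exact zero_ne_one this
    exact hH4 i j ▸ hs.hasSum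
  obtain ⟨v, hv, hMv⟩ := exists_pos_mulVec_nonneg hn hM hMirr
  have hKv : ∀ i, ∑ j, (cp i j * G i j + ∑ p, bp i j p * F i j p) * v j ≤ (1 - ap i) * v i := by
    intro i
    have h := hMv i
    simp only [Matrix.of_apply, sub_mul, ite_mul, zero_mul, Finset.sum_sub_distrib,
      Finset.sum_ite_eq, Finset.mem_univ, if_true] at h
    simp only [sub_mul]
    linarith
  obtain ⟨W, hW⟩ := solution_bounded a ν b τ c ζ I f g F G σ x ap bp cp v hA hB hC hA0 hζ1
    (fun i j p => (hH6f i j p).2.1.le) (fun i j => (hH6g i j).2.1.le)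
    (fun i j p => abs_le_mul_abs (hH6f i j p).1 (hH6f i j p).2.2)
    (fun i j => abs_le_mul_abs (hH6g i j).1 (hH6g i j).2.2) hv hKv hinit hH5 hmodel
  set L : Fin n → ℝ := fun i => limsup (fun m : ℤ => |x m i|) atTop with hL
  have hbdd : ∀ i, IsBoundedUnder (· ≤ ·) atTop (fun m : ℤ => |x m i|) := fun i =>
    isBoundedUnder_of ⟨W * v i, fun k => hW k i⟩
  have hcobdd : ∀ i, IsCoboundedUnder (· ≤ ·) atTop (fun m : ℤ => |x m i|) := fun i =>
    (isBoundedUnder_of ⟨0, fun k => abs_nonneg (x k i)⟩ :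
      IsBoundedUnder (· ≥ ·) atTop (fun m : ℤ => |x m i|)).isCoboundedUnder_le
  have hL0 : ∀ i, 0 ≤ L i := fun i =>
    le_limsup_of_frequently_le (Frequently.of_forall fun k => abs_nonneg _) (hbdd i)
  have hLW : ∀ i, L i ≤ W * v i := fun i =>
    limsup_le_of_le (hcobdd i) (Eventually.of_forall fun k => hW k i)
  have hxL : ∀ i, AsympLE atTop (fun k => x k i) (L i) := fun i ε hε =>
    (eventually_lt_of_limsup_lt (lt_add_of_pos_right (L i) hε) (hbdd i)).mono fun _ h => h.le
  have hW0 : ∀ i, 0 ≤ W * v i := fun i => (hL0 i).trans (hLW i)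
  -- pass to the limit superior in the recursion
  have hLle : ∀ i, L i ≤ ap i * L i +
      ∑ j, (cp i j * fstar (g i j) (L j) + ∑ p, bp i j p * fstar (f i j p) (L j)) := by
    intro i
    have h1 := ((hxL i).comp (hH2ν i)).mul_bdd (hA0 i) (hA i)
    have h2 := AsympLE.sum Finset.univ fun j => AsympLE.sum Finset.univ fun p =>
      (((hxL j).comp (hH2τ i j p)).comp_continuous (hH6f i j p).1).mul_bdd (hB0 i j p) (hB i j p)
    have h3 := AsympLE.sum Finset.univ fun j =>
      (AsympLE.convolution (hH4 i j) (H := G i j * (W * v j))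
        (fun k => (abs_le_mul_abs (hH6g i j).1 (hH6g i j).2.2 (x k j)).trans
          (mul_le_mul_of_nonneg_left (hW k j) (hH6g i j).2.1.le))
        ((hxL j).comp_continuous (hH6g i j).1)).mul_bdd (hC0 i j) (hC i j)
    have h4 := AsympLE.of_tendsto_zero (hH5 i).of_abs.tendsto_atTop_zero
    have h5 := ((h1.add h2).add h3).add h4
    refine le_of_forall_pos_le_add fun ε hε => limsup_le_of_le (hcobdd i) ?_
    obtain ⟨N, hN⟩ := eventually_atTop.1 (h5 ε hε)
    refine eventually_atTop.2 ⟨(max N σ : ℕ) + 1, fun k hk => ?_⟩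
    obtain ⟨m, hm⟩ := Int.eq_ofNat_of_zero_le (show 0 ≤ k - 1 by omega)
    have hkm : k = (m : ℤ) + 1 := by omega
    have hNm : max N σ ≤ m := by omega
    have h6 := hN m ((le_max_left _ _).trans hNm)
    beta_reduce at h6
    rw [← hmodel m ((le_max_right _ _).trans hNm) i] at h6
    rw [hkm]
    refine h6.trans (le_of_eq ?_)
    rw [Finset.sum_add_distrib]
    ring
  -- the absolute values in `Φ` make it monotone without tracking signs; they drop out since `S ≥ 0`
  obtain ⟨S, hLS, hS⟩ := exists_fixed_point_ge (L := L) (U := fun i => W * v i)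
    (Φ := fun S i => (1 / (1 - ap i)) *
      ∑ j, (cp i j * fstar (g i j) (|S j|) + ∑ p, bp i j p * fstar (f i j p) (|S j|)))
    (by
      intro S T h0 hST i
      have hj : ∀ j, |S j| ≤ |T j| := fun j => abs_le_abs_of_nonneg (h0 j) (hST j)
      refine mul_le_mul_of_nonneg_left (Finset.sum_le_sum fun j _ => add_le_add ?_
        (Finset.sum_le_sum fun p _ => ?_)) (one_div_nonneg.2 (hA1 i).le)
      · exact mul_le_mul_of_nonneg_left
          (fstar_mono (hH6g i j).1 (abs_nonneg _) (hj j)) (hC0 i j)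
      · exact mul_le_mul_of_nonneg_left
          (fstar_mono (hH6f i j p).1 (abs_nonneg _) (hj j)) (hB0 i j p))
    hL0 hLW
    (by
      intro i
      simp only [abs_of_nonneg (hL0 _)]
      rw [one_div, ← div_eq_inv_mul, le_div_iff₀ (hA1 i)]
      linarith [hLle i])
    (by
      intro i
      simp only [abs_of_nonneg (hW0 _)]
      rw [one_div, ← div_eq_inv_mul, div_le_iff₀ (hA1 i)]
      have hWn : 0 ≤ W := nonneg_of_mul_nonneg_left (hW0 i) (hv i)
      calc ∑ j, (cp i j * fstar (g i j) (W * v j) + ∑ p, bp i j p * fstar (f i j p) (W * v j))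
          ≤ ∑ j, (cp i j * (G i j * (W * v j)) + ∑ p, bp i j p * (F i j p * (W * v j))) := by
            refine Finset.sum_le_sum fun j _ => add_le_add ?_ (Finset.sum_le_sum fun p _ => ?_)
            · exact mul_le_mul_of_nonneg_left
                (fstar_le_mul (hH6g i j).1 (hH6g i j).2.1 (hH6g i j).2.2 (hW0 j)) (hC0 i j)
            · exact mul_le_mul_of_nonneg_left
                (fstar_le_mul (hH6f i j p).1 (hH6f i j p).2.1 (hH6f i j p).2.2 (hW0 j))
                (hB0 i j p)
        _ = W * ∑ j, (cp i j * G i j + ∑ p, bp i j p * F i j p) * v j :=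
            sum_weights _ _ _ _ _ _
        _ ≤ W * ((1 - ap i) * v i) := mul_le_mul_of_nonneg_left (hKv i) hWn
        _ = W * v i * (1 - ap i) := by ring)
  have hS0 : ∀ i, 0 ≤ S i := fun i => (hL0 i).trans (hLS i)
  refine ⟨S, hS0, hLS, fun i => ?_⟩
  have h := congrFun hS i
  simp only [abs_of_nonneg (hS0 _)] at h
  exact h.symm
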